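/- arXiv:2405.14418 — 5 statements merged into one kernel-verified Lean document; each statement's English description precedes it below -/
import Mathlib

section
/- Let d ≥ 1, let Σ be a symmetric positive definite real d×d matrix, let δ_n, δ_{−n} > 0, set δ := δ_n + δ_{−n}, λ_n := δ_n/δ, λ_{−n} := 1 − λ_n, and let ζ_n, ζ_{−n}, ψ ∈ ℝ^d with ζ := ζ_n + ζ_{−n}. Define φ̂_n := (λ_n (ζ_{−n} − ψ) − λ_{−n} ζ_n)/(λ_n + 1), the price-impact return ν̂_n := Σ(ζ_{−n} − ψ − φ̂_n)/δ_{−n}, the competitive return without investor n, ν_{−n} := Σ(ζ_{−n} − ψ)/δ_{−n}, and the competitive return ν* := Σ(ζ − ψ)/δ. Then ν̂_n = (λ_n/(λ_n + 1)) ν_{−n} + (1/(λ_n + 1)) ν*. -/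
/-!
Clearing brackets gives `ζ_{-n} - ψ - φ̂_n = (ζ_{-n} - ψ + λ_{-n} ζ_n) / (λ_n + 1)`. Since
`λ_{-n} / δ_{-n} = 1 / δ`, splitting the coefficient of `ζ_{-n} - ψ` as `1 = λ_n + λ_{-n}`
separates the `ν_{-n}` part from the `ν*` part; applying `Σ` is linear.
-/

open Matrix

/-- Equilibrium return under a single strategic investor:
`ν̂_n = (λ_n/(λ_n+1)) ν_{−n} + (1/(λ_n+1)) ν*`. -/
theorem stmt_4 (d : ℕ) (hd : 1 ≤ d)
    (Sig : Matrix (Fin d) (Fin d) ℝ) (hSig : Sig.PosDef)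
    (δn δmn : ℝ) (hδn : 0 < δn) (hδmn : 0 < δmn)
    (ζn ζmn ψ : Fin d → ℝ) :
    let δ : ℝ := δn + δmn
    let lamn : ℝ := δn / δ
    let lammn : ℝ := 1 - lamn
    let ζ : Fin d → ℝ := ζn + ζmn
    let φhat : Fin d → ℝ := (lamn + 1)⁻¹ • (lamn • (ζmn - ψ) - lammn • ζn)
    let νhat : Fin d → ℝ := δmn⁻¹ • (Sig *ᵥ (ζmn - ψ - φhat))
    let νmn : Fin d → ℝ := δmn⁻¹ • (Sig *ᵥ (ζmn - ψ))
    let νstar : Fin d → ℝ := δ⁻¹ • (Sig *ᵥ (ζ - ψ))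
    νhat = (lamn / (lamn + 1)) • νmn + (lamn + 1)⁻¹ • νstar := by
  intro δ lamn lammn ζ φhat νhat νmn νstar
  have hδ : 0 < δ := add_pos hδn hδmn
  have hl : lamn + 1 ≠ 0 := ne_of_gt (add_pos (div_pos hδn hδ) one_pos)
  -- The identity behind the claim: `λ_{-n} / δ_{-n} = 1 / δ`.
  have hstar : δ⁻¹ = δmn⁻¹ * (1 - lamn) := by
    have h : δ - δn = δmn := add_sub_cancel_left δn δmn
    simp only [lamn]
    field_simp
    linarith
  -- Both sides are the image under `Sig` of a vector, so it suffices to compare preimages.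
  simp only [νhat, νmn, νstar, ← mulVec_smul, ← mulVec_add]
  congr 1
  ext i
  simp only [φhat, ζ, lammn, hstar, Pi.smul_apply, Pi.add_apply, Pi.sub_apply, smul_eq_mul]
  clear_value lamn
  field_simp
  ring
end

section
/- Let d ≥ 1, let Σ be a symmetric positive definite real d×d matrix, let δ_n, δ_{−n} > 0, set δ := δ_n + δ_{−n}, λ_n := δ_n/δ, λ_{−n} := 1 − λ_n, and let ζ_n, ζ_{−n}, ψ ∈ ℝ^d. Define φ̂_n := (λ_n (ζ_{−n} − ψ) − λ_{−n} ζ_n)/(λ_n + 1) and ν̂_n := Σ(ζ_{−n} − ψ − φ̂_n)/δ_{−n}. Then the revealed risk exposure ζ_n(φ̂_n) := δ_n Σ⁻¹ ν̂_n − φ̂_n satisfies ζ_n(φ̂_n) = (λ_n²/(1 − λ_n²)) (ζ_{−n} − ψ) + (1/(1 + λ_n)) ζ_n. -/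
/-!
Since `Σ` is invertible, it cancels in `Σ⁻¹ ν̂_n`, so the revealed exposure equals
`(δ_n / δ_{-n}) (ζ_{-n} - ψ - φ̂_n) - φ̂_n`. Moreover `δ_n / δ_{-n} = λ_n / (1 - λ_n)` with
`0 < λ_n < 1`, and the claim becomes a rational identity in `λ_n` in each coordinate.
-/

open Matrix

/-- Proposition 3.5: the revealed risk exposure of the single strategic investor satisfies
`ζ_n(φ̂_n) = (λ_n²/(1 − λ_n²)) (ζ_{−n} − ψ) + (1/(1 + λ_n)) ζ_n`. -/
theorem stmt_5 (d : ℕ) (hd : 1 ≤ d)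
    (Sig : Matrix (Fin d) (Fin d) ℝ) (hSig : Sig.PosDef)
    (δn δmn : ℝ) (hδn : 0 < δn) (hδmn : 0 < δmn)
    (ζn ζmn ψ : Fin d → ℝ) :
    let δ : ℝ := δn + δmn
    let lamn : ℝ := δn / δ
    let lammn : ℝ := 1 - lamn
    let φhat : Fin d → ℝ := (lamn + 1)⁻¹ • (lamn • (ζmn - ψ) - lammn • ζn)
    let νhat : Fin d → ℝ := δmn⁻¹ • (Sig *ᵥ (ζmn - ψ - φhat))
    let revealed : Fin d → ℝ := δn • (Sig⁻¹ *ᵥ νhat) - φhat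
    revealed = (lamn ^ 2 / (1 - lamn ^ 2)) • (ζmn - ψ) + (1 + lamn)⁻¹ • ζn := by
  intro δ lamn lammn φhat νhat revealed
  have hδ : 0 < δ := add_pos hδn hδmn
  have hl0 : 0 < lamn := div_pos hδn hδ
  have hl1 : lamn < 1 := (div_lt_one hδ).2 (lt_add_of_pos_right δn hδmn)
  have hratio : δn * δmn⁻¹ = lamn / (1 - lamn) := by
    have h : 1 - lamn = δmn / δ := by
      simp only [lamn, δ]
      field_simp
      ring
    rw [h]
    simp only [lamn]
    field_simp
  have hinv : Sig⁻¹ *ᵥ νhat = δmn⁻¹ • (ζmn - ψ - φhat) := by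
    have hdet : IsUnit Sig.det := hSig.det_pos.ne'.isUnit
    simp only [νhat]
    rw [mulVec_smul, mulVec_mulVec, nonsing_inv_mul _ hdet, one_mulVec]
  -- Once `Σ` has cancelled, the identity is scalar in each coordinate and depends on
  -- `δ_n`, `δ_{-n}` only through `λ_n`.
  have hrev : revealed = (lamn / (1 - lamn)) • (ζmn - ψ - φhat) - φhat := by
    simp only [revealed]
    rw [hinv, smul_smul, hratio]
  rw [hrev]
  simp only [φhat, lammn]
  clear_value lamn
  have h1 : 1 - lamn ≠ 0 := by linarith
  have h2 : 1 + lamn ≠ 0 := by linarith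
  have h3 : lamn + 1 ≠ 0 := by linarith
  have h4 : 1 - lamn ^ 2 = (1 - lamn) * (1 + lamn) := by ring
  ext i
  simp only [Pi.add_apply, Pi.sub_apply, Pi.smul_apply, smul_eq_mul]
  rw [h4, add_comm lamn 1]
  field_simp
  ring
end

section
/- Let d ≥ 1, let Σ be a symmetric positive definite real d×d matrix, let δ_n, δ_{−n} > 0, set δ := δ_n + δ_{−n}, λ_n := δ_n/δ, λ_{−n} := 1 − λ_n, and let ζ_n, ζ_{−n}, ψ ∈ ℝ^d with ζ := ζ_n + ζ_{−n}. Define ν* := Σ(ζ − ψ)/δ, the competitive demand φ_n* := δ_n Σ⁻¹ ν* − ζ_n, and the best-response demand φ̂_n := (λ_n (ζ_{−n} − ψ) − λ_{−n} ζ_n)/(λ_n + 1). Then φ_n* = φ̂_n if and only if φ_n* = 0. -/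
/-!
Cancelling `Sig⁻¹ * Sig` in the competitive demand gives
`φstar = lamn • (ζmn - ψ) - lammn • ζn`, so the best response is the rescaling
`φhat = (lamn + 1)⁻¹ • φstar`. Since `lamn > 0`, the factor differs from `1`, and a vector
equal to its rescaling by such a factor is zero.
-/

open Matrix

/-- Corollary 3.7: the strategic best-response demand coincides with the competitive
demand if and only if the competitive demand vanishes. -/
theorem stmt_6 (d : ℕ) (hd : 1 ≤ d)
    (Sig : Matrix (Fin d) (Fin d) ℝ) (hSig : Sig.PosDef)
    (δn δmn : ℝ) (hδn : 0 < δn) (hδmn : 0 < δmn)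
    (ζn ζmn ψ : Fin d → ℝ) :
    let δ : ℝ := δn + δmn
    let lamn : ℝ := δn / δ
    let lammn : ℝ := 1 - lamn
    let ζ : Fin d → ℝ := ζn + ζmn
    let νstar : Fin d → ℝ := δ⁻¹ • (Sig *ᵥ (ζ - ψ))
    let φstar : Fin d → ℝ := δn • (Sig⁻¹ *ᵥ νstar) - ζn
    let φhat : Fin d → ℝ := (lamn + 1)⁻¹ • (lamn • (ζmn - ψ) - lammn • ζn)
    (φstar = φhat ↔ φstar = 0) := by
  intro δ lamn lammn ζ νstar φstar φhat
  have hδ : 0 < δ := add_pos hδn hδmn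
  have hlam : 0 < lamn := div_pos hδn hδ
  have hdet : IsUnit Sig.det := (Matrix.isUnit_iff_isUnit_det Sig).mp hSig.isUnit
  -- `Sig⁻¹` cancels `Sig`, so the competitive demand is the numerator of the best response.
  have hstar : φstar = lamn • (ζmn - ψ) - lammn • ζn := by
    have hν : Sig⁻¹ *ᵥ νstar = δ⁻¹ • (ζ - ψ) := by
      simp only [νstar, Matrix.mulVec_smul, Matrix.mulVec_mulVec,
        Matrix.nonsing_inv_mul _ hdet, Matrix.one_mulVec]
    simp only [φstar, hν]
    ext i
    simp only [ζ, lammn, lamn, Pi.sub_apply, Pi.smul_apply, Pi.add_apply, smul_eq_mul]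
    ring
  have hhat : φhat = (lamn + 1)⁻¹ • φstar := by rw [hstar]
  rw [hhat]
  constructor
  · intro h
    have h2 : (lamn + 1) • φstar = φstar := by
      conv_lhs => rw [h]
      exact smul_inv_smul₀ (by positivity) φstar
    rw [add_smul, one_smul, add_eq_right] at h2
    exact (smul_eq_zero.mp h2).resolve_left hlam.ne'
  · intro h
    rw [h, smul_zero]
end

section
/- Let d ≥ 1, N ≥ 2, let Σ be a symmetric positive definite real d×d matrix, let δ_1, …, δ_N > 0 with δ := ∑_m δ_m and λ_m := δ_m/δ, and let ζ_1, …, ζ_N, ψ ∈ ℝ^d with ζ := ∑_m ζ_m. Define the competitive equilibrium return ν* := Σ(ζ − ψ)/δ, the competitive demands φ_m* := δ_m Σ⁻¹ ν* − ζ_m, and the Nash equilibrium return ν̆ := (Σ/δ) · ((ζ − ψ) − ∑_m λ_m ζ_m)/(1 − ∑_m λ_m²). Then ν̆ − ν* = (Σ/δ) · (1/(1 − ∑_m λ_m²)) · ∑_{m=1}^N λ_m φ_m*. -/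
/-!
Since `Σ⁻¹ ν* = (ζ - ψ) / δ`, the competitive demands are `φ_m* = λ_m (ζ - ψ) - ζ_m`, so
`∑ λ_m φ_m* = S (ζ - ψ) - ∑ λ_m ζ_m` with `S = ∑ λ_m²`. Hence
`(ζ - ψ) - ∑ λ_m ζ_m = (1 - S) (ζ - ψ) + ∑ λ_m φ_m*`, and applying `Σ / (δ (1 - S))` gives
`ν̆ = ν* +` premium. Dividing by `1 - S` is legitimate because at least two positive weights
summing to one have squares summing to less than one (`sum_sq_weights_lt_one`).
-/

open Matrix Finset

theorem sum_sq_weights_lt_one {N : ℕ} (hN : 2 ≤ N) (w : Fin N → ℝ) (hw : ∀ m, 0 < w m)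
    (hsum : ∑ m, w m = 1) : ∑ m, (w m) ^ 2 < 1 := by
  have : Nontrivial (Fin N) := Fin.nontrivial_iff_two_le.mpr hN
  have hlt : ∀ m, w m < 1 := by
    intro m
    obtain ⟨k, hk⟩ := exists_ne m
    rw [← hsum]
    exact Finset.single_lt_sum hk (Finset.mem_univ m) (Finset.mem_univ k) (hw k)
      (fun j _ _ => (hw j).le)
  calc ∑ m, (w m) ^ 2 < ∑ m, w m := by
        refine Finset.sum_lt_sum_of_nonempty ⟨⟨0, by omega⟩, Finset.mem_univ _⟩ fun m _ => ?_
        nlinarith [hw m, hlt m]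
    _ = 1 := hsum

/-- Liquidity premium from price impact (equation (3.15)):
`ν̆ − ν* = (Σ/δ)(1/(1 − ∑ λ_m²)) ∑_m λ_m φ_m*`. -/
theorem stmt_10 (d N : ℕ) (hd : 1 ≤ d) (hN : 2 ≤ N)
    (Sig : Matrix (Fin d) (Fin d) ℝ) (hSig : Sig.PosDef)
    (δs : Fin N → ℝ) (hδs : ∀ m, 0 < δs m)
    (ζs : Fin N → Fin d → ℝ) (ψ : Fin d → ℝ) :
    let δ : ℝ := ∑ m, δs m
    let lam : Fin N → ℝ := fun m => δs m / δ
    let ζ : Fin d → ℝ := ∑ m, ζs m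
    let νstar : Fin d → ℝ := δ⁻¹ • (Sig *ᵥ (ζ - ψ))
    let φstar : Fin N → Fin d → ℝ := fun m => δs m • (Sig⁻¹ *ᵥ νstar) - ζs m
    let νbreve : Fin d → ℝ :=
      (δ * (1 - ∑ m, (lam m) ^ 2))⁻¹ • (Sig *ᵥ ((ζ - ψ) - ∑ m, lam m • ζs m))
    νbreve - νstar =
      (δ * (1 - ∑ m, (lam m) ^ 2))⁻¹ • (Sig *ᵥ (∑ m, lam m • φstar m)) := by
  intro δ lam ζ νstar φstar νbreve
  have hδ : 0 < δ := Finset.sum_pos (fun m _ => hδs m) ⟨⟨0, by omega⟩, Finset.mem_univ _⟩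
  have hS : ∑ m, (lam m) ^ 2 < 1 := by
    refine sum_sq_weights_lt_one hN lam (fun m => div_pos (hδs m) hδ) ?_
    rw [← Finset.sum_div]
    exact div_self hδ.ne'
  have hinv : Sig⁻¹ *ᵥ νstar = δ⁻¹ • (ζ - ψ) := by
    have hdet : IsUnit Sig.det := hSig.det_pos.ne'.isUnit
    simp only [νstar, Matrix.mulVec_smul, Matrix.mulVec_mulVec, Matrix.nonsing_inv_mul _ hdet,
      Matrix.one_mulVec]
  have hφ : ∀ m, lam m • φstar m = (lam m) ^ 2 • (ζ - ψ) - lam m • ζs m := by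
    intro m
    simp only [φstar, hinv, smul_sub, smul_smul, lam, div_eq_mul_inv, sq]
  have hsum : ∑ m, lam m • φstar m
      = (∑ m, (lam m) ^ 2) • (ζ - ψ) - ∑ m, lam m • ζs m := by
    simp only [hφ, Finset.sum_sub_distrib, Finset.sum_smul]
  rw [hsum]
  simp only [νbreve, νstar, Matrix.mulVec_sub Sig _ (∑ m, lam m • ζs m), Matrix.mulVec_smul]
  have hne : 1 - ∑ m, (lam m) ^ 2 ≠ 0 := by linarith
  have hδne := hδ.ne'
  ext i
  simp only [Pi.sub_apply, Pi.smul_apply, smul_eq_mul]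
  field_simp
  ring
end

section
/- Let d ≥ 1, N ≥ 2, let Σ be a symmetric positive definite real d×d matrix, let δ̄ > 0, and let ζ_1, …, ζ_N, ψ ∈ ℝ^d with ζ := ∑_m ζ_m. Define ν* := Σ(ζ − ψ)/(N δ̄) and ν̆ := (Σ/(N δ̄)) · ((ζ − ψ) − (1/N) ζ)/(1 − 1/N). Then ν̆ − ν* = − Σ ψ / (δ̄ N (N − 1)), and consequently (ν̆ − ν*)ᵀ ψ ≤ 0, with equality if and only if ψ = 0. -/
/-!
In `ν̆ − ν*` the coefficients of `Σζ` cancel and those of `Σψ` add up to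
`−1/(δ̄(N−1)) + 1/(Nδ̄) = −1/(δ̄N(N−1))`. Hence `(ν̆ − ν*)ᵀψ` is a negative multiple of the
quadratic form `ψᵀΣψ`, which is positive for `ψ ≠ 0` because `Σ` is positive definite.
-/

open Matrix Finset

/-- Equal-risk-tolerance liquidity premium: `ν̆ − ν* = −Σψ/(δ̄ N(N−1))`, hence
`(ν̆ − ν*)ᵀ ψ ≤ 0` with equality iff `ψ = 0`. -/
theorem stmt_11 (d N : ℕ) (hd : 1 ≤ d) (hN : 2 ≤ N)
    (Sig : Matrix (Fin d) (Fin d) ℝ) (hSig : Sig.PosDef)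
    (δbar : ℝ) (hδbar : 0 < δbar)
    (ζs : Fin N → Fin d → ℝ) (ψ : Fin d → ℝ) :
    let ζ : Fin d → ℝ := ∑ m, ζs m
    let νstar : Fin d → ℝ := ((N : ℝ) * δbar)⁻¹ • (Sig *ᵥ (ζ - ψ))
    let νbreve : Fin d → ℝ :=
      (((N : ℝ) * δbar) * (1 - 1 / (N : ℝ)))⁻¹ •
        (Sig *ᵥ ((ζ - ψ) - ((N : ℝ))⁻¹ • ζ))
    νbreve - νstar = -((δbar * (N : ℝ) * ((N : ℝ) - 1))⁻¹ • (Sig *ᵥ ψ)) ∧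
      (νbreve - νstar) ⬝ᵥ ψ ≤ 0 ∧
      ((νbreve - νstar) ⬝ᵥ ψ = 0 ↔ ψ = 0) := by
  intro ζ νstar νbreve
  have hN2 : (2 : ℝ) ≤ N := by exact_mod_cast hN
  have hN0 : (N : ℝ) ≠ 0 := by linarith
  have hN1 : (0 : ℝ) < (N : ℝ) - 1 := by linarith
  have premium :
      νbreve - νstar = -((δbar * (N : ℝ) * ((N : ℝ) - 1))⁻¹ • (Sig *ᵥ ψ)) := by
    have hfactor : (N : ℝ) * δbar * (1 - 1 / (N : ℝ)) = δbar * ((N : ℝ) - 1) := by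
      field_simp
    have hN1' := hN1.ne'
    ext i
    simp only [νbreve, νstar, hfactor, mulVec_sub, mulVec_smul, Pi.sub_apply, Pi.neg_apply,
      Pi.smul_apply, smul_eq_mul]
    field_simp
    ring
  have hc : 0 < (δbar * (N : ℝ) * ((N : ℝ) - 1))⁻¹ := by positivity
  have hdot : (νbreve - νstar) ⬝ᵥ ψ =
      -((δbar * (N : ℝ) * ((N : ℝ) - 1))⁻¹ * (ψ ⬝ᵥ (Sig *ᵥ ψ))) := by
    rw [premium, neg_dotProduct, smul_dotProduct, smul_eq_mul, dotProduct_comm]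
  have hpos : ψ ≠ 0 → 0 < ψ ⬝ᵥ (Sig *ᵥ ψ) := fun h => by
    simpa using hSig.dotProduct_mulVec_pos h
  refine ⟨premium, ?_⟩
  rw [hdot]
  by_cases h : ψ = 0
  · simp [h]
  · have hneg := mul_pos hc (hpos h)
    exact ⟨by linarith, fun h0 => by linarith, fun h0 => absurd h0 h⟩
end
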